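/- Let L be an orthomodular lattice and B a quasipoint of L. Then B is atomic (i.e. there exists a ∈ L such that B is the only quasipoint of L containing a) if and only if there exists an atom a₀ of L such that B = {a ∈ L : a₀ ≤ a}; moreover such an atom a₀ is unique. Conversely, for every atom a₀ of L, the set {a ∈ L : a₀ ≤ a} is a quasipoint of L. -/

import Mathlib

/-- A filter base in an ordered set `L` with least element `⊥`:
a nonempty subset not containing `⊥` in which any two elements have a common lower bound. -/
def IsFilterBase {L : Type*} [PartialOrder L] [OrderBot L] (B : Set L) : Prop :=
  B.Nonempty ∧ ⊥ ∉ B ∧ ∀ a ∈ B, ∀ b ∈ B, ∃ c ∈ B, c ≤ a ∧ c ≤ b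

/-- A quasipoint is a maximal filter base. -/
def IsQuasipoint {L : Type*} [PartialOrder L] [OrderBot L] (B : Set L) : Prop :=
  IsFilterBase B ∧ ∀ C : Set L, IsFilterBase C → B ⊆ C → C = B

/-- The set of quasipoints of `L`. -/
def Quasipoint (L : Type*) [PartialOrder L] [OrderBot L] : Type _ :=
  {B : Set L // IsQuasipoint B}

/-- The basic (cl)open set of the Stone spectrum determined by `a : L`. -/
def Qset {L : Type*} [PartialOrder L] [OrderBot L] (a : L) : Set (Quasipoint L) :=
  {B | a ∈ B.1}

/-- The Stone topology on the set of quasipoints, generated by the sets `Qset a`. -/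
instance {L : Type*} [PartialOrder L] [OrderBot L] : TopologicalSpace (Quasipoint L) :=
  TopologicalSpace.generateFrom (Set.range (Qset : L → Set (Quasipoint L)))

/-!
If `a` lies in a single quasipoint `B`, then every nonzero `b ≤ a` lies in some quasipoint, which
also contains `a` and is therefore `B`; so the nonzero elements below `a` are pairwise
non-disjoint. In an orthomodular lattice, `b < a` leaves a nonzero element `oc b ⊓ a` below `a` and
disjoint from `b`, so `b` must be `⊥` and `a` is an atom. Conversely, a nonzero common lower bound
of an atom `a` and an element `x` is `a` itself, so any filter base containing `a` lies in
`Set.Ici a`.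
-/

/-- A poset with `⊥` is section semicomplemented if no element strictly below `a` meets all the
nonzero elements below `a`. The nonzero `c` generalizes the complement `oc b ⊓ a` of `b`
relative to `a` in an orthomodular lattice. -/
def IsSectionSemicomplemented (L : Type*) [PartialOrder L] [OrderBot L] : Prop :=
  ∀ ⦃a b : L⦄, b < a → ∃ c ≤ a, c ≠ ⊥ ∧ Disjoint b c

section Orthocomplement

variable {L : Type*} [Lattice L] {oc : L → L}

theorem sup_oc_inf_eq_of_le
    (h_compl_inf : ∀ a b : L, oc (a ⊓ b) = oc a ⊔ oc b)
    (h_compl_compl : ∀ a : L, oc (oc a) = a)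
    (h_orthomodular : ∀ a b : L, b ≤ a → b = a ⊓ (oc a ⊔ b))
    {a b : L} (hba : b ≤ a) : b ⊔ oc b ⊓ a = a := by
  have oc_le : oc a ≤ oc b := by
    rw [← inf_eq_left.mpr hba, h_compl_inf]
    exact le_sup_right
  calc
    b ⊔ oc b ⊓ a = oc (oc b ⊓ oc (oc b ⊓ a)) := by rw [h_compl_inf, h_compl_compl, h_compl_compl]
    _ = oc (oc b ⊓ (oc (oc b) ⊔ oc a)) := by rw [h_compl_inf (oc b) a]
    _ = oc (oc a) := by rw [← h_orthomodular _ _ oc_le]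
    _ = a := h_compl_compl a

theorem isSectionSemicomplemented_of_orthomodular [OrderBot L]
    (h_inf_compl : ∀ a : L, a ⊓ oc a = ⊥)
    (h_compl_inf : ∀ a b : L, oc (a ⊓ b) = oc a ⊔ oc b)
    (h_compl_compl : ∀ a : L, oc (oc a) = a)
    (h_orthomodular : ∀ a b : L, b ≤ a → b = a ⊓ (oc a ⊔ b)) :
    IsSectionSemicomplemented L := by
  intro a b hba
  have hsup : b ⊔ oc b ⊓ a = a :=
    sup_oc_inf_eq_of_le h_compl_inf h_compl_compl h_orthomodular hba.le
  refine ⟨oc b ⊓ a, inf_le_right, fun hbot => hba.ne ?_,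
    (disjoint_iff.mpr (h_inf_compl b)).mono_right inf_le_left⟩
  rwa [hbot, sup_bot_eq] at hsup

end Orthocomplement

section FilterBase

variable {L : Type*} [PartialOrder L] [OrderBot L] {a b : L} {B : Set L}

theorem isFilterBase_Ici (ha : a ≠ ⊥) : IsFilterBase (Set.Ici a) :=
  ⟨Set.nonempty_Ici, fun h => ha (le_bot_iff.mp h), fun _ hx _ hy => ⟨a, le_rfl, hx, hy⟩⟩

theorem isFilterBase_sUnion {S : Set (Set L)} (hne : S.Nonempty) (hdir : DirectedOn (· ⊆ ·) S)
    (hS : ∀ B ∈ S, IsFilterBase B) : IsFilterBase (⋃₀ S) := by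
  refine ⟨?_, ?_, Set.directedOn_sUnion (r := (· ≥ ·)) hdir fun B hB => (hS B hB).2.2⟩
  · obtain ⟨B, hB⟩ := hne
    exact (hS B hB).1.mono (Set.subset_sUnion_of_mem hB)
  · rintro ⟨B, hB, hbot⟩
    exact (hS B hB).2.1 hbot

namespace IsFilterBase

protected theorem upperClosure (hB : IsFilterBase B) : IsFilterBase (upperClosure B : Set L) := by
  obtain ⟨hne, hbot, hdir⟩ := hB
  refine ⟨hne.mono subset_upperClosure, ?_, ?_⟩
  · rintro ⟨x, hx, hx_bot⟩
    exact hbot (le_bot_iff.mp hx_bot ▸ hx)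
  · rintro x ⟨x', hx', hxx'⟩ y ⟨y', hy', hyy'⟩
    obtain ⟨c, hc, hcx, hcy⟩ := hdir x' hx' y' hy'
    exact ⟨c, subset_upperClosure hc, hcx.trans hxx', hcy.trans hyy'⟩

theorem not_disjoint (hB : IsFilterBase B) (ha : a ∈ B) (hb : b ∈ B) : ¬Disjoint a b := by
  intro hab
  obtain ⟨c, hc, hca, hcb⟩ := hB.2.2 a ha b hb
  exact hB.2.1 (le_bot_iff.mp (hab hca hcb) ▸ hc)

theorem subset_Ici_of_isAtom (hB : IsFilterBase B) (ha : IsAtom a) (haB : a ∈ B) :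
    B ⊆ Set.Ici a := by
  intro x hx
  obtain ⟨c, hc, hca, hcx⟩ := hB.2.2 a haB x hx
  have c_eq : c = a := (ha.le_iff_eq (ne_of_mem_of_not_mem hc hB.2.1)).mp hca
  exact c_eq ▸ hcx

theorem exists_isQuasipoint_superset (hB : IsFilterBase B) : ∃ C, IsQuasipoint C ∧ B ⊆ C := by
  obtain ⟨C, hBC, hC⟩ := zorn_subset_nonempty {C : Set L | IsFilterBase C}
    (fun S hS hchain hne => ⟨⋃₀ S, isFilterBase_sUnion hne hchain.directedOn hS,
      fun _ => Set.subset_sUnion_of_mem⟩) B hB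
  exact ⟨C, ⟨hC.prop, fun _ hD hCD => hC.eq_of_superset hD hCD⟩, hBC⟩

end IsFilterBase

end FilterBase

section Quasipoint

variable {L : Type*} [PartialOrder L] [OrderBot L] {a b : L}

theorem exists_isQuasipoint_mem (ha : a ≠ ⊥) : ∃ B : Set L, IsQuasipoint B ∧ a ∈ B := by
  obtain ⟨B, hB, haB⟩ := (isFilterBase_Ici ha).exists_isQuasipoint_superset
  exact ⟨B, hB, haB Set.self_mem_Ici⟩

theorem isQuasipoint_Ici_of_isAtom (ha : IsAtom a) : IsQuasipoint (Set.Ici a) :=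
  ⟨isFilterBase_Ici ha.ne_bot, fun _ hC haC =>
    (hC.subset_Ici_of_isAtom ha (haC Set.self_mem_Ici)).antisymm haC⟩

namespace IsQuasipoint

variable {B : Set L}

theorem isUpperSet (hB : IsQuasipoint B) : IsUpperSet B := by
  rw [← hB.2 _ hB.1.upperClosure subset_upperClosure]
  exact (upperClosure B).upper

theorem eq_Ici_of_isAtom (hB : IsQuasipoint B) (ha : IsAtom a) (haB : a ∈ B) : B = Set.Ici a :=
  (hB.1.subset_Ici_of_isAtom ha haB).antisymm (hB.isUpperSet.Ici_subset haB)

end IsQuasipoint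

variable {B : Quasipoint L}

theorem mem_of_qset_eq_singleton (hB : Qset a = {B}) (hb : b ≠ ⊥) (hba : b ≤ a) : b ∈ B.1 := by
  obtain ⟨C, hC, hbC⟩ := exists_isQuasipoint_mem hb
  have C_mem : (⟨C, hC⟩ : Quasipoint L) ∈ Qset a := hC.isUpperSet hba hbC
  have C_eq : (⟨C, hC⟩ : Quasipoint L) = B := by rwa [hB] at C_mem
  exact C_eq ▸ hbC

theorem isAtom_of_qset_eq_singleton (hL : IsSectionSemicomplemented L) (hB : Qset a = {B}) :
    IsAtom a := by
  have haB : a ∈ B.1 := hB.ge rfl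
  refine ⟨fun ha => B.2.1.2.1 (ha ▸ haB), fun b hba => by_contra fun hb => ?_⟩
  obtain ⟨c, hca, hc, hbc⟩ := hL hba
  exact B.2.1.not_disjoint (mem_of_qset_eq_singleton hB hb hba.le)
    (mem_of_qset_eq_singleton hB hc hca) hbc

theorem qset_eq_singleton_of_isAtom (ha : IsAtom a) (haB : a ∈ B.1) : Qset a = {B} :=
  Set.eq_singleton_iff_unique_mem.mpr ⟨haB, fun C haC => Subtype.ext <|
    (C.2.eq_Ici_of_isAtom ha haC).trans (B.2.eq_Ici_of_isAtom ha haB).symm⟩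

end Quasipoint

theorem atomic_quasipoint_iff_atom_general {L : Type*} [PartialOrder L] [OrderBot L]
    (hL : IsSectionSemicomplemented L) :
    (∀ B : Quasipoint L,
      (∃ a : L, {C : Quasipoint L | a ∈ C.1} = {B}) ↔
        ∃! a₀ : L, IsAtom a₀ ∧ B.1 = {a : L | a₀ ≤ a}) ∧
    (∀ a₀ : L, IsAtom a₀ → IsQuasipoint {a : L | a₀ ≤ a}) := by
  refine ⟨fun B => ⟨?_, ?_⟩, fun _ => isQuasipoint_Ici_of_isAtom⟩
  · rintro ⟨a, hB⟩
    have ha : IsAtom a := isAtom_of_qset_eq_singleton hL hB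
    have hBa : B.1 = Set.Ici a := B.2.eq_Ici_of_isAtom ha (hB.ge rfl)
    exact ⟨a, ⟨ha, hBa⟩, fun _ hb => Set.Ici_injective (hb.2.symm.trans hBa)⟩
  · rintro ⟨a₀, ⟨ha₀, hBa₀⟩, -⟩
    exact ⟨a₀, qset_eq_singleton_of_isAtom ha₀ (hBa₀.ge le_rfl)⟩

/-- In an orthomodular lattice `L`, a quasipoint `B` is atomic (there is an `a ∈ L` such that
`B` is the only quasipoint containing `a`) iff there is a (necessarily unique) atom `a₀` of `L`
with `B = {a | a₀ ≤ a}`; and conversely, for every atom `a₀` the set `{a | a₀ ≤ a}`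
is a quasipoint. -/
theorem atomic_quasipoint_iff_atom {L : Type*} [Lattice L] [BoundedOrder L]
    (oc : L → L)
    (h_inf_compl : ∀ a : L, a ⊓ oc a = ⊥)
    (h_sup_compl : ∀ a : L, a ⊔ oc a = ⊤)
    (h_compl_inf : ∀ a b : L, oc (a ⊓ b) = oc a ⊔ oc b)
    (h_compl_sup : ∀ a b : L, oc (a ⊔ b) = oc a ⊓ oc b)
    (h_compl_compl : ∀ a : L, oc (oc a) = a)
    (h_orthomodular : ∀ a b : L, b ≤ a → b = a ⊓ (oc a ⊔ b)) :
    (∀ B : Quasipoint L,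
      (∃ a : L, {C : Quasipoint L | a ∈ C.1} = {B}) ↔
        ∃! a₀ : L, IsAtom a₀ ∧ B.1 = {a : L | a₀ ≤ a}) ∧
    (∀ a₀ : L, IsAtom a₀ → IsQuasipoint {a : L | a₀ ≤ a}) :=
  atomic_quasipoint_iff_atom_general <| isSectionSemicomplemented_of_orthomodular
    h_inf_compl h_compl_inf h_compl_compl h_orthomodular
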